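/- The posets NC(U_{m,n}), NC(V_{m,n}), and NC(S_{m,n}) are rank-symmetric: writing P for the corresponding configuration, ρ(π) = |P| − (number of blocks of π), and h = |P| − 1 for the height, for every k ∈ {0, …, h} the number of noncrossing partitions π of P with ρ(π) = k equals the number of noncrossing partitions π of P with ρ(π) = h − k. -/

import Mathlib

open Finset

/-- A finpartition of a finite set of points in the plane is *noncrossing* if the
convex hulls (over `ℝ`) of its blocks are pairwise disjoint. -/
def IsNoncrossing {P : Finset ℂ} (π : Finpartition P) : Prop :=
  (π.parts : Set (Finset ℂ)).Pairwise fun B₁ B₂ =>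
    Disjoint (convexHull ℝ (B₁ : Set ℂ)) (convexHull ℝ (B₂ : Set ℂ))

/-- The poset `NC(P)` of noncrossing partitions of `P`, ordered by refinement:
`π ≤ μ` iff every block of `μ` is a union of blocks of `π`. -/
abbrev NC (P : Finset ℂ) : Type := {π : Finpartition P // IsNoncrossing π}

/-- The blocks of a noncrossing partition. -/
def NC.parts {P : Finset ℂ} (π : NC P) : Finset (Finset ℂ) := π.1.parts

/-- Two points lie in a common block of a noncrossing partition. -/
def NC.SameBlock {P : Finset ℂ} (π : NC P) (a b : ℂ) : Prop :=
  ∃ B ∈ π.parts, a ∈ B ∧ b ∈ B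

/-- The open cone configuration `U_{m,n} = {1, …, m} ∪ {i, 2i, …, ni} ⊆ ℂ`. -/
noncomputable def Uconfig (m n : ℕ) : Finset ℂ :=
  ((Finset.Icc 1 m).image fun j : ℕ => (j : ℂ)) ∪
    ((Finset.Icc 1 n).image fun k : ℕ => (k : ℂ) * Complex.I)

/-- The closed cone configuration `V_{m,n} = U_{m,n} ∪ {0}`. -/
noncomputable def Vconfig (m n : ℕ) : Finset ℂ := insert 0 (Uconfig m n)

/-- The real point `x_k = -1 + 2k/(m+1)` of the semicircular configuration `S_{m,n}`. -/
noncomputable def Sx (m k : ℕ) : ℂ := -1 + 2 * (k : ℂ) / ((m : ℂ) + 1)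

/-- The circle point `y_j = exp(iπj/(n+1))` of the semicircular configuration `S_{m,n}`. -/
noncomputable def Sy (n j : ℕ) : ℂ :=
  Complex.exp ((Real.pi : ℂ) * (j : ℂ) / ((n : ℂ) + 1) * Complex.I)

/-- The semicircular configuration `S_{m,n}`: the `m+2` real points
`x_k = -1 + 2k/(m+1)` for `k = 0, …, m+1` (including the endpoints `±1`) together
with the `n` points `y_j = exp(iπj/(n+1))` for `j = 1, …, n` on the open upper
unit semicircle. -/
noncomputable def Sconfig (m n : ℕ) : Finset ℂ :=
  ((Finset.range (m + 2)).image fun k : ℕ => Sx m k) ∪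
    ((Finset.Icc 1 n).image fun j : ℕ => Sy n j)

/-!
List the points of a configuration in boundary order and record a noncrossing partition by sending
each point to the first point of its block. The points are added one at a time: a new point opens a
block, joins the block of its predecessor, or joins one of the older blocks it still sees, and only
the number `v` of those matters for the future. Weighting each block by `t`, the sum over all
partitions is therefore computed by operators on functions `φ` of `v`. Let
`K φ v = φ v + t φ (v + 1)` and `S φ v = φ 0 + ⋯ + φ (v - 1)`. A point on the first side acts by
`K`, one on the last side by `1 + t` in place of `K`, and past the first side `S` is added. The
identity `K S = (1 + t) S + t` shows that these operators preserve the condition that `(K ^ n φ) 0`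
is palindromic of degree `d + n` for every `n`, each raising `d` by one. Hence the generating
polynomial of the noncrossing partitions of `N` points by number of blocks is palindromic of degree
`N + 1`, which is rank symmetry.
-/

section Palindromic

open Polynomial

variable {R : Type*} [CommSemiring R]

/-- The polynomials that are palindromic of formal degree `d`: they have degree at most `d`, and
their `i`-th and `(d - i)`-th coefficients agree. -/
def palindromic (R : Type*) [CommSemiring R] (d : ℕ) : AddSubmonoid R[X] where
  carrier := {p | p.natDegree ≤ d ∧ p.reflect d = p}
  zero_mem' := by simp
  add_mem' := fun hp hq => ⟨natDegree_add_le_of_degree_le hp.1 hq.1, by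
    rw [reflect_add, hp.2, hq.2]⟩

instance : SetLike.GradedMonoid (palindromic R) where
  one_mem := ⟨natDegree_one.le, by simp⟩
  mul_mem _ _ _ _ hp hq := ⟨natDegree_mul_le_of_le hp.1 hq.1, by
    rw [reflect_mul _ _ hp.1 hq.1, hp.2, hq.2]⟩

lemma X_mem_palindromic : (X : R[X]) ∈ palindromic R 2 :=
  ⟨natDegree_X_le.trans one_le_two, by simpa using reflect_monomial (R := R) 2 1⟩

lemma one_add_X_mem_palindromic : (1 + X : R[X]) ∈ palindromic R 1 :=
  ⟨natDegree_add_le_of_degree_le (by simp) natDegree_X_le, by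
    rw [reflect_add, reflect_one_X, reflect_one, pow_one, add_comm]⟩

lemma coeff_eq_coeff_of_mem_palindromic {p : R[X]} {i j : ℕ} (hp : p ∈ palindromic R (i + j)) :
    p.coeff i = p.coeff j := by
  conv_lhs => rw [← hp.2]
  rw [coeff_reflect, revAt_le (Nat.le_add_right i j), Nat.add_sub_cancel_left]

end Palindromic

section Balanced

open Polynomial

variable {R : Type*} [CommSemiring R]

/-- The operator of partial sums: it sums the outcomes of joining one of `v` exposed blocks, which
leaves `0`, …, or `v - 1` of them exposed. -/
def prefixSum : Module.End R (ℕ → R) where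
  toFun φ v := ∑ j ∈ range v, φ j
  map_add' _ _ := funext fun _ => sum_add_distrib
  map_smul' _ _ := funext fun _ => (mul_sum _ _ _).symm

/-- The operator `1 + t • shift`: it sums the outcomes of joining the latest block, which exposes no
further block, and of opening a new block, which has weight `t` and exposes the latest one. -/
def sideStep (t : R) : Module.End R (ℕ → R) := 1 + t • LinearMap.funLeft R R Nat.succ

lemma sideStep_apply (t : R) (φ : ℕ → R) (v : ℕ) : sideStep t φ v = φ v + t * φ (v + 1) := rfl

lemma sideStep_prefixSum (t : R) (φ : ℕ → R) :
    sideStep t (prefixSum φ) = (1 + t) • prefixSum φ + t • φ := by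
  funext v
  simp only [sideStep_apply, prefixSum, LinearMap.coe_mk, AddHom.coe_mk, sum_range_succ,
    Pi.add_apply, Pi.smul_apply, smul_eq_mul]
  ring

/-- A sequence of polynomials is *balanced* of degree `d` if all its side steps have palindromic
value at `0`, of degree growing by one with each step. This is the induction invariant that replaces
palindromicity, which the transfer operators do not preserve pointwise. -/
def IsBalanced (d : ℕ) (φ : ℕ → R[X]) : Prop :=
  ∀ n, (sideStep X ^ n) φ 0 ∈ palindromic R (d + n)

namespace IsBalanced

variable {d : ℕ} {φ ψ : ℕ → R[X]}

lemma apply_zero_mem (hφ : IsBalanced d φ) : φ 0 ∈ palindromic R d := hφ 0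

lemma add (hφ : IsBalanced d φ) (hψ : IsBalanced d ψ) : IsBalanced d (φ + ψ) := fun n => by
  rw [map_add]
  exact add_mem (hφ n) (hψ n)

lemma smul {e : ℕ} {c : R[X]} (hc : c ∈ palindromic R e) (hφ : IsBalanced d φ) :
    IsBalanced (e + d) (c • φ) := fun n => by
  rw [map_smul, add_assoc]
  exact SetLike.mul_mem_graded hc (hφ n)

lemma sideStep (hφ : IsBalanced d φ) : IsBalanced (d + 1) (sideStep X φ) := fun n => by
  rw [← Module.End.mul_apply, ← pow_succ, add_right_comm]
  exact hφ (n + 1)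

lemma one_add_X_smul (hφ : IsBalanced d φ) : IsBalanced (d + 1) ((1 + X : R[X]) • φ) := by
  rw [add_comm]
  exact hφ.smul one_add_X_mem_palindromic

lemma prefixSum (hφ : IsBalanced d φ) : IsBalanced (d + 1) (prefixSum φ) := by
  intro n
  induction n with
  | zero => exact zero_mem _
  | succ n ih =>
    rw [pow_succ, Module.End.mul_apply, sideStep_prefixSum, map_add, map_smul, map_smul]
    refine add_mem ?_ ?_
    · rw [← add_assoc, add_comm _ 1]
      exact SetLike.mul_mem_graded one_add_X_mem_palindromic ih
    · rw [show d + 1 + (n + 1) = 2 + (d + n) by ring]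
      exact SetLike.mul_mem_graded X_mem_palindromic (hφ n)

end IsBalanced

lemma isBalanced_zero (d : ℕ) : IsBalanced d (0 : ℕ → R[X]) := fun n => by
  rw [map_zero]
  exact zero_mem _

lemma isBalanced_one : IsBalanced 0 (1 : ℕ → R[X]) := by
  have hpow (n : ℕ) : (sideStep X ^ n) (1 : ℕ → R[X]) = (1 + X : R[X]) ^ n • 1 := by
    induction n with
    | zero => simp
    | succ n ih =>
      have h1 : sideStep X (1 : ℕ → R[X]) = (1 + X : R[X]) • 1 := by
        funext v
        simp [sideStep_apply]
      rw [pow_succ, Module.End.mul_apply, h1, map_smul, ih, smul_smul, pow_succ']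
  intro n
  have h := SetLike.pow_mem_graded n (one_add_X_mem_palindromic (R := R))
  simpa [hpow] using h

end Balanced

section Labelings

variable {r : ℕ → ℕ → Prop} {f g : ℕ → ℕ} {N k : ℕ}

/-- The point with index `N` may join the block whose first point has index `k` (or open a block, if
`k = N`) without crossing the blocks of the points of smaller index. Here `f i` is the index of the
first point of the block of `i`, and `r i N` means that the points from `i` to `N` lie on a common
side, so that joining a block through `i` absorbs all points in between. -/
structure Attaches (r : ℕ → ℕ → Prop) (f : ℕ → ℕ) (N k : ℕ) : Prop where
  le : k ≤ N
  visible : ∀ i < N, k ≤ i → k ≤ f i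
  side : ∀ i j, i < j → j < N → r i N → f i = k → f j = k

lemma Attaches.congr (h : Attaches r f N k) (hfg : ∀ i < N, f i = g i) : Attaches r g N k where
  le := h.le
  visible i hi hk := hfg i hi ▸ h.visible i hi hk
  side i j hij hj hr hi := hfg j hj ▸ h.side i j hij hj hr ((hfg i (hij.trans hj)).trans hi)

open Classical in
/-- The first points of the blocks that the point with index `N` may join, including `N` itself. -/
noncomputable def attachments (r : ℕ → ℕ → Prop) (f : ℕ → ℕ) (N : ℕ) : Finset ℕ :=
  {k ∈ range (N + 1) | Attaches r f N k}

lemma mem_attachments : k ∈ attachments r f N ↔ Attaches r f N k := by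
  simpa [attachments] using fun h : Attaches r f N k => Nat.lt_succ_of_le h.le

lemma attachments_zero : attachments r f 0 = {0} := by
  ext k
  rw [mem_attachments, mem_singleton]
  exact ⟨fun h => Nat.le_zero.mp h.le, by rintro rfl; exact ⟨le_rfl, by simp, by simp⟩⟩

open Classical in
/-- The functions sending each index below `N` to the first index of its block in a noncrossing
partition of `N` points on a boundary with sides `r`. They are the identity from `N` on, so that
distinct labelings are distinct functions. -/
noncomputable def labelings (r : ℕ → ℕ → Prop) : ℕ → Finset (ℕ → ℕ)
  | 0 => {id}
  | N + 1 => (labelings r N).biUnion fun f => (attachments r f N).image (Function.update f N)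

lemma mem_labelings :
    f ∈ labelings r N ↔ (∀ j < N, Attaches r f j (f j)) ∧ ∀ i, N ≤ i → f i = i := by
  induction N generalizing f with
  | zero => simp [labelings, funext_iff]
  | succ N ih =>
    simp only [labelings, mem_biUnion, mem_image, mem_attachments, ih]
    constructor
    · rintro ⟨g, ⟨hg, hgid⟩, k, hk, rfl⟩
      have hlt : ∀ i < N, g i = Function.update g N k i := fun i hi =>
        (Function.update_of_ne hi.ne k g).symm
      refine ⟨fun j hj => ?_, fun i hi => ?_⟩
      · rcases Nat.lt_succ_iff_lt_or_eq.mp hj with hj | rfl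
        · rw [← hlt j hj]
          exact (hg j hj).congr fun i hi => hlt i (hi.trans hj)
        · rw [Function.update_self]
          exact hk.congr hlt
      · rw [Function.update_of_ne (by omega), hgid i (by omega)]
    · rintro ⟨hf, hid⟩
      have hlt : ∀ i < N, f i = Function.update f N N i := fun i hi =>
        (Function.update_of_ne hi.ne N f).symm
      refine ⟨Function.update f N N, ⟨fun j hj => ?_, fun i hi => ?_⟩, f N,
        (hf N N.lt_succ_self).congr hlt, by simp⟩
      · rw [← hlt j hj]
        exact (hf j (hj.trans N.lt_succ_self)).congr fun i hi => hlt i (hi.trans hj)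
      · rcases hi.eq_or_lt with rfl | hi
        · exact Function.update_self ..
        · rw [Function.update_of_ne hi.ne', hid i hi]

lemma sum_labelings_succ {A : Type*} [AddCommMonoid A] (w : (ℕ → ℕ) → A) :
    ∑ f ∈ labelings r (N + 1), w f =
      ∑ f ∈ labelings r N, ∑ k ∈ attachments r f N, w (Function.update f N k) := by
  classical
  rw [labelings, sum_biUnion]
  · exact sum_congr rfl fun f _ =>
      sum_image fun k _ l _ h => Function.update_injective f N h
  · intro f hf g hg hfg
    refine disjoint_left.mpr fun u hu hv => hfg ?_
    obtain ⟨k, -, rfl⟩ := mem_image.mp hu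
    obtain ⟨l, -, hl⟩ := mem_image.mp hv
    funext i
    rcases eq_or_ne i N with rfl | hi
    · rw [(mem_labelings.mp hf).2 i le_rfl, (mem_labelings.mp hg).2 i le_rfl]
    · simpa [hi] using (congrFun hl i).symm

/-- The number of blocks of a labeling, counted by their first indices. -/
def numBlocks (f : ℕ → ℕ) (N : ℕ) : ℕ := #{i ∈ range N | f i = i}

lemma numBlocks_update :
    numBlocks (Function.update f N k) (N + 1) = numBlocks f N + if k = N then 1 else 0 := by
  have h : {i ∈ range N | Function.update f N k i = i} = {i ∈ range N | f i = i} :=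
    filter_congr fun i hi => by rw [Function.update_of_ne (mem_range.mp hi).ne]
  rw [numBlocks, numBlocks, range_add_one, filter_insert, Function.update_self, h]
  split_ifs with hk
  · rw [card_insert_of_notMem (by simp)]
  · rfl

section

variable (hf : f ∈ labelings r N)
include hf

lemma label_le (i : ℕ) : f i ≤ i := by
  rcases lt_or_ge i N with hi | hi
  · exact ((mem_labelings.mp hf).1 i hi).le
  · exact ((mem_labelings.mp hf).2 i hi).le

lemma label_le_label {i j : ℕ} (hij : i ≤ j) (hji : f j ≤ i) : f j ≤ f i := by
  rcases hij.eq_or_lt with rfl | hij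
  · rfl
  rcases lt_or_ge j N with hj | hj
  · exact ((mem_labelings.mp hf).1 j hj).visible i hij hji
  · have := (mem_labelings.mp hf).2 j hj
    omega

lemma label_label (i : ℕ) : f (f i) = f i :=
  (label_le hf _).antisymm (label_le_label hf (label_le hf i) le_rfl)

end

-- Here `i` is the last point of block `c` before `d`, and `j + 1` is the first one after `d`.
lemma exists_gap {c d : ℕ} (hf : f ∈ labelings r N)
    (hcd : c < d) (hd : d < N) (hfc : f c = c) (hfd : f d = d) :
    ∃ i j, i < j ∧ j < N ∧ ¬(j + 1 < N ∧ r i (j + 1)) ∧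
      (∀ l < N, f l = c → l ≤ i ∨ j < l) ∧ ∀ l < N, f l = d → i < l ∧ l ≤ j := by
  obtain ⟨i, ⟨hid, hfi⟩, himax⟩ : ∃ i, Maximal (fun i => i < d ∧ f i = c) i :=
    (Set.finite_Iio d).subset (fun _ hx => hx.1) |>.exists_maximal ⟨c, hcd, hfc⟩
  have hex : ∃ j, d ≤ j ∧ (j + 1 < N → f (j + 1) = c) := ⟨N - 1, by omega, by omega⟩
  classical
  obtain ⟨hdj, hfj⟩ := Nat.find_spec hex
  have hjmin {l : ℕ} (hdl : d < l) (hfl : f l = c) : Nat.find hex < l := by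
    have := Nat.find_min' hex (m := l - 1)
      ⟨by omega, fun _ => by rwa [Nat.sub_add_cancel (by omega)]⟩
    omega
  have hjN : Nat.find hex ≤ N - 1 := Nat.find_min' hex ⟨by omega, by omega⟩
  generalize Nat.find hex = j at *
  refine ⟨i, j, hid.trans_le hdj, by omega, ?_, fun l _ hfl => ?_, fun l hl hfl => ?_⟩
  · rintro ⟨hj, hr⟩
    have hfd' := ((mem_labelings.mp hf).1 (j + 1) hj).side i d hid (by omega) hr
      (hfi.trans (hfj hj).symm)
    have := hfj hj
    omega
  · rcases lt_trichotomy l d with hld | rfl | hdl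
    · exact Or.inl (le_of_not_gt fun hil => (himax ⟨hld, hfl⟩ hil.le).not_gt hil)
    · omega
    · exact Or.inr (hjmin hdl hfl)
  · have hdl : d ≤ l := hfl ▸ label_le hf l
    refine ⟨hid.trans_le hdl, le_of_not_gt fun hjl => ?_⟩
    have hfj := hfj (by omega)
    have := label_le_label hf (show j + 1 ≤ l from hjl) (by omega)
    omega

end Labelings

section TransferSum

open Polynomial

variable {a s M k : ℕ} {f : ℕ → ℕ}

/-- The side relation of a boundary whose points up to index `a` lie on one side, whose points from
index `s` on lie on another, and which has no further sides: for `i < k` it says that the points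
from `i` to `k` share a side. -/
def twoSides (a s i k : ℕ) : Prop := k ≤ a ∨ s ≤ i

/-- The first points of the blocks, other than that of the latest point `M`, which the next point
may join if it lies beyond the first side: no block closes over them, and none of their points
shares the last side with `M`. -/
def exposed (s : ℕ) (f : ℕ → ℕ) (M : ℕ) : Finset ℕ :=
  {k ∈ range M | (∀ i ≤ M, k ≤ i → k ≤ f i) ∧ ∀ i ≤ M, min M s ≤ i → k < f i}

lemma mem_exposed (hf : f ∈ labelings (twoSides a s) (M + 1)) : k ∈ exposed s f M ↔
    (∀ i ≤ M, k ≤ i → k ≤ f i) ∧ ∀ i ≤ M, min M s ≤ i → k < f i := by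
  simp only [exposed, mem_filter, mem_range, and_iff_right_iff_imp]
  exact fun h => (h.2 M le_rfl (min_le_left _ _)).trans_le (label_le hf M)

lemma lt_of_mem_exposed (hk : k ∈ exposed s f M) : k < f M :=
  (mem_filter.mp hk).2.2 M le_rfl (min_le_left _ _)

lemma attaches_last (hf : f ∈ labelings (twoSides a s) (M + 1)) :
    Attaches (twoSides a s) f (M + 1) (f M) where
  le := (label_le hf M).trans M.le_succ
  visible i hi := (label_le_label hf (Nat.le_of_lt_succ hi) ·)
  side i j hij hj hr hi := by
    rcases Nat.lt_succ_iff_lt_or_eq.mp hj with hj | rfl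
    · exact ((mem_labelings.mp hf).1 M M.lt_succ_self).side i j hij hj
        (hr.imp_left M.le_succ.trans) hi
    · rfl

lemma attaches_of_mem_exposed (hk : k ∈ exposed s f M) (haM : a ≤ M) :
    Attaches (twoSides a s) f (M + 1) k := by
  obtain ⟨hkM, hvis, hside⟩ := mem_filter.mp hk
  rw [mem_range] at hkM
  refine ⟨by omega, fun i hi => hvis i (Nat.le_of_lt_succ hi), fun i j hij hj hr hi => ?_⟩
  have := hside i (by omega) (by unfold twoSides at hr; omega)
  omega

lemma mem_exposed_of_attaches (hf : f ∈ labelings (twoSides a s) (M + 1))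
    (h : Attaches (twoSides a s) f (M + 1) k) (hnew : k ≠ M + 1) (hlast : k ≠ f M) :
    a ≤ M ∧ k ∈ exposed s f M := by
  have hkM : k ≤ M := Nat.le_of_lt_succ (h.le.lt_of_ne hnew)
  have hfk : f k = k := (label_le hf k).antisymm (h.visible k (by omega) le_rfl)
  have hside {i : ℕ} (hi : i ≤ M) (hr : twoSides a s i (M + 1)) : f i ≠ k := by
    intro hik
    rcases hi.eq_or_lt with rfl | hi
    · exact hlast hik.symm
    · exact hlast (h.side i M hi M.lt_succ_self hr hik).symm
  have haM : a ≤ M := by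
    by_contra! hMa
    exact hside hkM (Or.inl hMa) hfk
  refine ⟨haM, (mem_exposed hf).mpr
    ⟨fun i hi => h.visible i (Nat.lt_succ_of_le hi), fun i hi hsi => ?_⟩⟩
  have hki : k ≤ i := by
    by_contra! hik
    exact hside hkM (Or.inr (by omega)) hfk
  refine (h.visible i (Nat.lt_succ_of_le hi) hki).lt_of_ne' ?_
  rcases hi.eq_or_lt with rfl | hi
  · exact hlast.symm
  · exact hside hi.le (Or.inr (by omega))

lemma attaches_succ_iff (hf : f ∈ labelings (twoSides a s) (M + 1)) :
    Attaches (twoSides a s) f (M + 1) k ↔ k = M + 1 ∨ k = f M ∨ a ≤ M ∧ k ∈ exposed s f M := by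
  constructor
  · intro h
    by_contra! hne
    obtain ⟨haM, hk⟩ := mem_exposed_of_attaches hf h hne.1 hne.2.1
    exact hne.2.2 haM hk
  · rintro (rfl | rfl | ⟨haM, hk⟩)
    · refine ⟨le_rfl, fun i hi hk => by omega, fun i j hij hj _ hi => ?_⟩
      have := label_le hf i
      omega
    · exact attaches_last hf
    · exact attaches_of_mem_exposed hk haM

lemma mem_exposed_update {l : ℕ} (hk : k ≤ M + 1) :
    l ∈ exposed s (Function.update f (M + 1) k) (M + 1) ↔
      l < k ∧ (∀ i ≤ M, l ≤ i → l ≤ f i) ∧ ∀ i ≤ M, s ≤ i → l < f i := by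
  have hu : ∀ i ≤ M, Function.update f (M + 1) k i = f i := fun i hi =>
    Function.update_of_ne (by omega) k f
  simp only [exposed, mem_filter, mem_range]
  constructor
  · rintro ⟨-, hvis, hside⟩
    refine ⟨by simpa using hside (M + 1) le_rfl (min_le_left _ _), fun i hi hl => ?_,
      fun i hi hs => ?_⟩
    · exact hu i hi ▸ hvis i (by omega) hl
    · exact hu i hi ▸ hside i (by omega) (min_le_of_right_le hs)
  · rintro ⟨hlk, hvis, hside⟩
    refine ⟨hlk.trans_le hk, fun i hi hl => ?_, fun i hi hs => ?_⟩ <;>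
      rcases hi.eq_or_lt with rfl | hi
    · simpa using hlk.le
    · exact (hu i (by omega)).symm ▸ hvis i (by omega) hl
    · simpa using hlk
    · exact (hu i (by omega)).symm ▸ hside i (by omega) (by omega)

section

variable (hf : f ∈ labelings (twoSides a s) (M + 1))
include hf

lemma exposed_update_of_le (hk : k ≤ f M) :
    exposed s (Function.update f (M + 1) k) (M + 1) = {l ∈ exposed s f M | l < k} := by
  have hkM := hk.trans (label_le hf M)
  ext l
  rw [mem_exposed_update (by omega), mem_filter, mem_exposed hf, and_comm]
  refine and_congr_left fun hlk => and_congr_right fun _ =>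
    ⟨fun h i hi hMs => ?_, fun h i hi hs => h i hi (min_le_of_right_le hs)⟩
  rcases hi.eq_or_lt with rfl | hi
  · exact hlk.trans_le hk
  · exact h i hi.le (by omega)

lemma exposed_update_last :
    exposed s (Function.update f (M + 1) (f M)) (M + 1) = exposed s f M := by
  rw [exposed_update_of_le hf le_rfl, filter_true_of_mem fun _ => lt_of_mem_exposed]

lemma exposed_update_new :
    exposed s (Function.update f (M + 1) (M + 1)) (M + 1) =
      if M < s then insert (f M) (exposed s f M) else exposed s f M := by
  have hlast := label_le hf M
  ext l
  rw [mem_exposed_update le_rfl]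
  split_ifs with hMs
  · rw [mem_insert, mem_exposed hf]
    constructor
    · rintro ⟨hl, hvis, -⟩
      refine (hvis M le_rfl (by omega)).eq_or_lt.imp_right fun hl => ⟨hvis, fun i hi hi' => ?_⟩
      rwa [show i = M by omega]
    · rintro (rfl | ⟨hvis, hside⟩)
      · exact ⟨by omega, fun i hi => (label_le_label hf hi ·), fun i hi hs => by omega⟩
      · have := hside M le_rfl (min_le_left _ _)
        exact ⟨by omega, hvis, fun i hi hs => by omega⟩
  · rw [mem_exposed hf, min_eq_right (not_lt.mp hMs), and_iff_right_iff_imp]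
    intro h
    have := h.2 M le_rfl (not_lt.mp hMs)
    omega

end

lemma sum_card_filter_lt {A : Type*} [AddCommMonoid A] (φ : ℕ → A) (D : Finset ℕ) :
    ∑ k ∈ D, φ #{l ∈ D | l < k} = ∑ j ∈ range #D, φ j := by
  induction D using Finset.induction_on_max with
  | empty => simp
  | insert m D hm ih =>
    have hmD : m ∉ D := fun h => (hm m h).false
    have hlt : {l ∈ insert m D | l < m} = D := by
      rw [filter_insert, if_neg (lt_irrefl m), filter_true_of_mem hm]
    have hD : ∀ k ∈ D, {l ∈ insert m D | l < k} = {l ∈ D | l < k} := fun k hk => by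
      rw [filter_insert, if_neg (hm k hk).not_gt]
    rw [sum_insert hmD, hlt, card_insert_of_notMem hmD, sum_range_succ, add_comm, ← ih]
    exact congrArg (· + _) (sum_congr rfl fun k hk => by rw [hD k hk])

variable {R : Type*} [CommSemiring R]

/-- The sum of `φ v` over the noncrossing configurations of `M + 1` points, with `v` the number of
exposed blocks, weighted by `t` for each block. -/
noncomputable def transferSum (t : R) (a s M : ℕ) (φ : ℕ → R) : R :=
  ∑ f ∈ labelings (twoSides a s) (M + 1), t ^ numBlocks f (M + 1) * φ #(exposed s f M)

/-- The effect on `transferSum` of adding the point with index `M + 1`: its new or latest block is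
accounted for by the first summand, an exposed block by the second. -/
def transferStep (t : R) (a s M : ℕ) : Module.End R (ℕ → R) :=
  (if M < s then sideStep t else (1 + t) • 1) + if a ≤ M then prefixSum else 0

lemma transferSum_zero (t : R) (φ : ℕ → R) : transferSum t a s 0 φ = t * φ 0 := by
  rw [transferSum, sum_labelings_succ, labelings, sum_singleton, attachments_zero, sum_singleton,
    numBlocks_update]
  simp [numBlocks, exposed]

lemma sum_attachments_succ {A : Type*} [AddCommMonoid A]
    (hf : f ∈ labelings (twoSides a s) (M + 1)) (w : ℕ → A) :
    ∑ k ∈ attachments (twoSides a s) f (M + 1), w k =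
      w (M + 1) + w (f M) + if a ≤ M then ∑ k ∈ exposed s f M, w k else 0 := by
  have hlast := label_le hf M
  have h : attachments (twoSides a s) f (M + 1) =
      insert (M + 1) (insert (f M) (if a ≤ M then exposed s f M else ∅)) := by
    ext k
    rw [mem_attachments, attaches_succ_iff hf]
    split_ifs with haM <;> simp [haM]
  have hlt {k : ℕ} (hk : k ∈ if a ≤ M then exposed s f M else ∅) : k < f M := by
    split_ifs at hk
    · exact lt_of_mem_exposed hk
    · simp at hk
  rw [h, sum_insert, sum_insert fun hk => (hlt hk).false, add_assoc]
  · split_ifs <;> simp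
  · rw [mem_insert]
    rintro (hk | hk)
    · omega
    · have := hlt hk
      omega

lemma transferSum_succ (t : R) (φ : ℕ → R) :
    transferSum t a s (M + 1) φ = transferSum t a s M (transferStep t a s M φ) := by
  rw [transferSum, sum_labelings_succ]
  refine sum_congr rfl fun f hf => ?_
  have hlast := label_le hf M
  have hlast_ne : f M ≠ M + 1 := by omega
  have hexp : ∑ k ∈ exposed s f M, t ^ numBlocks (Function.update f (M + 1) k) (M + 1 + 1) *
      φ #(exposed s (Function.update f (M + 1) k) (M + 1)) =
        t ^ numBlocks f (M + 1) * prefixSum φ #(exposed s f M) := by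
    change _ = _ * ∑ j ∈ range _, φ j
    rw [← sum_card_filter_lt, mul_sum]
    refine sum_congr rfl fun k hk => ?_
    have hkf := lt_of_mem_exposed hk
    rw [exposed_update_of_le hf hkf.le, numBlocks_update, if_neg (by omega), add_zero]
  rw [sum_attachments_succ hf, hexp, exposed_update_last hf, exposed_update_new hf,
    numBlocks_update, numBlocks_update, if_pos rfl, if_neg hlast_ne, transferStep]
  have hmem : f M ∉ exposed s f M := fun h => (lt_of_mem_exposed h).false
  by_cases hMs : M < s <;> by_cases haM : a ≤ M <;>
    simp only [hMs, haM, if_true, if_false, card_insert_of_notMem hmem, LinearMap.add_apply,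
      Pi.add_apply, sideStep_apply, LinearMap.smul_apply, Pi.smul_apply, Module.End.one_apply,
      LinearMap.zero_apply, Pi.zero_apply, smul_eq_mul] <;> ring

lemma IsBalanced.transferStep {d : ℕ} {φ : ℕ → R[X]} (hφ : IsBalanced d φ) (a s M : ℕ) :
    IsBalanced (d + 1) (transferStep X a s M φ) := by
  rw [_root_.transferStep, LinearMap.add_apply]
  refine IsBalanced.add ?_ ?_
  · split_ifs
    · exact hφ.sideStep
    · exact hφ.one_add_X_smul
  · split_ifs
    · exact hφ.prefixSum
    · exact isBalanced_zero _

theorem transferSum_mem_palindromic {d : ℕ} {φ : ℕ → R[X]} (hφ : IsBalanced d φ) :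
    transferSum X a s M φ ∈ palindromic R (M + d + 2) := by
  induction M generalizing d φ with
  | zero =>
    rw [transferSum_zero, zero_add, add_comm]
    exact SetLike.mul_mem_graded X_mem_palindromic hφ.apply_zero_mem
  | succ M ih =>
    rw [transferSum_succ, add_right_comm M, add_assoc M]
    exact ih (hφ.transferStep a s M)

end TransferSum

section Orientation

/-- Twice the signed area of the triangle `a`, `b`, `c`, positive if it is traversed
counterclockwise. -/
def orient (a b c : ℂ) : ℝ :=
  (b.re - a.re) * (c.im - a.im) - (b.im - a.im) * (c.re - a.re)

lemma orient_rotate (a b c : ℂ) : orient b c a = orient a b c := by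
  unfold orient
  ring

lemma orient_swap_left (a b c : ℂ) : orient b a c = -orient a b c := by
  unfold orient
  ring

lemma orient_swap_right (a b c : ℂ) : orient a c b = -orient a b c := by
  unfold orient
  ring

lemma orient_self_left (a b : ℂ) : orient a a b = 0 := by
  unfold orient
  ring

lemma orient_self_right (a b : ℂ) : orient a b b = 0 := by
  unfold orient
  ring

lemma orient_eq_zero_of_mem_segment {a b c : ℂ} (h : b ∈ segment ℝ a c) : orient a b c = 0 := by
  obtain ⟨u, v, -, -, huv, rfl⟩ := h
  obtain rfl : u = 1 - v := eq_sub_of_add_eq huv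
  simp only [orient, Complex.add_re, Complex.add_im, Complex.smul_re, Complex.smul_im, smul_eq_mul]
  ring

lemma orient_midpoint (a a' b b' c : ℂ) : orient (midpoint ℝ a a') (midpoint ℝ b b') c =
    (orient a b c + orient a b' c + orient a' b c + orient a' b' c) / 4 := by
  simp only [orient, midpoint_eq_smul_add, Complex.add_re, Complex.add_im, Complex.smul_re,
    Complex.smul_im, smul_eq_mul, invOf_eq_inv]
  ring

lemma convex_setOf_orient_pos (a b : ℂ) : Convex ℝ {z | 0 < orient a b z} := by
  have hlin : IsLinearMap ℝ fun z : ℂ => (b.re - a.re) * z.im - (b.im - a.im) * z.re := by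
    constructor <;> intros <;> simp <;> ring
  have hset : {z | 0 < orient a b z} = {z : ℂ | (b.re - a.re) * a.im - (b.im - a.im) * a.re <
      (b.re - a.re) * z.im - (b.im - a.im) * z.re} := by
    ext z
    simp only [orient, Set.mem_ofPred_eq]
    constructor <;> intro h <;> linarith
  exact hset ▸ convex_halfSpace_gt hlin _

lemma disjoint_convexHull_of_orient {a b : ℂ} {A B : Set ℂ} (hA : ∀ z ∈ A, 0 < orient a b z)
    (hB : ∀ z ∈ B, orient a b z < 0) : Disjoint (convexHull ℝ A) (convexHull ℝ B) := by
  refine Set.disjoint_left.mpr fun z hzA hzB => ?_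
  have hpos : 0 < orient a b z := convexHull_min hA (convex_setOf_orient_pos a b) hzA
  have hneg : 0 < orient b a z := convexHull_min
    (fun w hw => by simpa [orient_swap_left a b] using hB w hw) (convex_setOf_orient_pos b a) hzB
  rw [orient_swap_left] at hneg
  linarith

lemma exists_mem_segment_inter {a b c d : ℂ} (habc : 0 < orient a b c) (habd : 0 ≤ orient a b d)
    (hacd : 0 ≤ orient a c d) (hbcd : 0 ≤ orient b c d) :
    ∃ z, z ∈ segment ℝ a c ∧ z ∈ segment ℝ b d := by
  have hsum : orient b c d + orient a b d = orient a c d + orient a b c := by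
    unfold orient
    ring
  set t := orient a c d + orient a b c with ht
  have ht0 : 0 < t := by positivity
  refine ⟨(orient b c d / t) • a + (orient a b d / t) • c,
    ⟨_, _, by positivity, by positivity, ?_, rfl⟩,
    ⟨orient a c d / t, orient a b c / t, by positivity, by positivity, ?_, ?_⟩⟩
  · rw [← add_div, hsum, div_self ht0.ne']
  · rw [← add_div, ← ht, div_self ht0.ne']
  · apply Complex.ext <;>
      simp only [Complex.add_re, Complex.add_im, Complex.smul_re, Complex.smul_im, smul_eq_mul] <;>
      field_simp <;> unfold orient <;> ring

end Orientation

/-- The points `p 0, …, p (N - 1)` lie in counterclockwise order on the boundary of a convex region,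
and `r i k` says that those from `p i` to `p k` lie on a common side. The auxiliary point `p N`
extends the chain, on no side, so that every point of the chain has an edge leaving it. -/
structure IsConvexChain (r : ℕ → ℕ → Prop) (p : ℕ → ℂ) (N : ℕ) : Prop where
  orient_pos : ∀ ⦃i j k⦄, i < j → j < k → k ≤ N → ¬(k < N ∧ r i k) → 0 < orient (p i) (p j) (p k)
  mem_segment : ∀ ⦃i j k⦄, i < j → j < k → k < N → r i k → p j ∈ segment ℝ (p i) (p k)
  mono : ∀ ⦃i i' k k'⦄, r i k → i ≤ i' → k' ≤ k → r i' k'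

namespace IsConvexChain

variable {r : ℕ → ℕ → Prop} {p : ℕ → ℂ} {N i j k l : ℕ} (h : IsConvexChain r p N)
include h

lemma orient_nonneg (hij : i ≤ j) (hjk : j ≤ k) (hk : k ≤ N) :
    0 ≤ orient (p i) (p j) (p k) := by
  rcases hij.eq_or_lt with rfl | hij
  · rw [orient_self_left]
  rcases hjk.eq_or_lt with rfl | hjk
  · rw [orient_self_right]
  by_cases hr : k < N ∧ r i k
  · rw [orient_eq_zero_of_mem_segment (h.mem_segment hij hjk hr.1 hr.2)]
  · exact (h.orient_pos hij hjk hk hr).le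

lemma injOn : Set.InjOn p (Set.Iio N) := by
  have hne {i j : ℕ} (hij : i < j) (hj : j < N) : p i ≠ p j := fun hp => by
    have := h.orient_pos hij hj le_rfl (by simp)
    rw [hp, orient_self_left] at this
    exact this.false
  intro i hi j hj hp
  by_contra hij
  rcases lt_or_gt_of_ne hij with hij | hij
  · exact hne hij hj hp
  · exact hne hij hi hp.symm

lemma segments_cross (hij : i < j) (hjk : j < k) (hkl : k < l) (hl : l < N) :
    ∃ z, z ∈ segment ℝ (p i) (p k) ∧ z ∈ segment ℝ (p j) (p l) := by
  by_cases hr : k < N ∧ r i k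
  · exact ⟨p j, h.mem_segment hij hjk hr.1 hr.2, left_mem_segment ℝ _ _⟩
  · exact exists_mem_segment_inter (h.orient_pos hij hjk (by omega) hr)
      (h.orient_nonneg hij.le (by omega) hl.le) (h.orient_nonneg (by omega) hkl.le hl.le)
      (h.orient_nonneg hjk.le hkl.le hl.le)

-- The separating line joins the midpoints of the edges `p i`, `p (i + 1)` and `p j`, `p (j + 1)`.
lemma disjoint_convexHull {A B : Set ℕ} (hij : i < j) (hj : j < N) (hr : ¬(j + 1 < N ∧ r i (j + 1)))
    (hA : ∀ l ∈ A, l < N ∧ (l ≤ i ∨ j < l)) (hB : ∀ l ∈ B, i < l ∧ l ≤ j) :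
    Disjoint (convexHull ℝ (p '' A)) (convexHull ℝ (p '' B)) := by
  refine disjoint_convexHull_of_orient (a := midpoint ℝ (p i) (p (i + 1)))
    (b := midpoint ℝ (p j) (p (j + 1))) ?_ ?_ <;> rintro _ ⟨l, hl, rfl⟩ <;> rw [orient_midpoint]
  · obtain ⟨hlN, hli | hjl⟩ := hA l hl
    · simp only [orient_rotate (p l)]
      have h₁ : 0 ≤ orient (p l) (p i) (p j) := h.orient_nonneg hli hij.le hj.le
      have h₂ : 0 ≤ orient (p l) (p i) (p (j + 1)) := h.orient_nonneg hli (by omega) hj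
      have h₃ : 0 ≤ orient (p l) (p (i + 1)) (p j) := h.orient_nonneg (by omega) hij hj.le
      have h₄ : 0 < orient (p l) (p (i + 1)) (p (j + 1)) :=
        h.orient_pos (by omega) (by omega) hj fun hr' => hr ⟨hr'.1, h.mono hr'.2 hli le_rfl⟩
      linarith
    · have h₁ : 0 < orient (p i) (p j) (p l) :=
        h.orient_pos hij hjl hlN.le fun hr' => hr ⟨by omega, h.mono hr'.2 le_rfl hjl⟩
      have h₂ : 0 ≤ orient (p i) (p (j + 1)) (p l) := h.orient_nonneg (by omega) hjl hlN.le
      have h₃ : 0 ≤ orient (p (i + 1)) (p j) (p l) := h.orient_nonneg hij hjl.le hlN.le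
      have h₄ : 0 ≤ orient (p (i + 1)) (p (j + 1)) (p l) := h.orient_nonneg (by omega) hjl hlN.le
      linarith
  · obtain ⟨hil, hlj⟩ := hB l hl
    simp only [orient_swap_right _ (p l)]
    have h₁ : 0 ≤ orient (p i) (p l) (p j) := h.orient_nonneg hil.le hlj hj.le
    have h₂ : 0 < orient (p i) (p l) (p (j + 1)) := h.orient_pos hil (by omega) hj hr
    have h₃ : 0 ≤ orient (p (i + 1)) (p l) (p j) := h.orient_nonneg hil hlj hj.le
    have h₄ : 0 ≤ orient (p (i + 1)) (p l) (p (j + 1)) := h.orient_nonneg hil (by omega) hj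
    linarith

end IsConvexChain

section BlockLabel

variable {α : Type*} [DecidableEq α] {p : ℕ → α} {N i j : ℕ}
  (π ρ : Finpartition ((range N).image p))

/-- The first index below `N` of a point in the block of `p i`, or `i` itself if `N ≤ i`. -/
noncomputable def blockLabel (i : ℕ) : ℕ :=
  if i < N then sInf {j | j < N ∧ π.part (p j) = π.part (p i)} else i

lemma mem_image_range (p : ℕ → α) (hi : i < N) : p i ∈ (range N).image p :=
  mem_image_of_mem p (mem_range.mpr hi)

lemma blockLabel_of_le (hi : N ≤ i) : blockLabel π i = i := if_neg hi.not_gt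

lemma blockLabel_spec (hi : i < N) :
    blockLabel π i < N ∧ π.part (p (blockLabel π i)) = π.part (p i) := by
  rw [blockLabel, if_pos hi]
  exact Nat.sInf_mem (s := {j | j < N ∧ π.part (p j) = π.part (p i)}) ⟨i, hi, rfl⟩

lemma blockLabel_le_of_part_eq (hi : i < N) (hj : j < N) (h : π.part (p j) = π.part (p i)) :
    blockLabel π i ≤ j := by
  rw [blockLabel, if_pos hi]
  exact Nat.sInf_le ⟨hj, h⟩

lemma blockLabel_le (i : ℕ) : blockLabel π i ≤ i := by
  rcases lt_or_ge i N with hi | hi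
  · exact blockLabel_le_of_part_eq π hi hi rfl
  · exact (blockLabel_of_le π hi).le

lemma blockLabel_eq_blockLabel_iff (hi : i < N) (hj : j < N) :
    blockLabel π i = blockLabel π j ↔ π.part (p i) = π.part (p j) := by
  constructor
  · intro h
    rw [← (blockLabel_spec π hi).2, h, (blockLabel_spec π hj).2]
  · intro h
    rw [blockLabel, blockLabel, if_pos hi, if_pos hj, h]

lemma blockLabel_blockLabel (hi : i < N) : blockLabel π (blockLabel π i) = blockLabel π i :=
  (blockLabel_eq_blockLabel_iff π (blockLabel_spec π hi).1 hi).mpr (blockLabel_spec π hi).2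

lemma mem_part_iff_blockLabel_eq (hi : i < N) (hj : j < N) :
    p j ∈ π.part (p i) ↔ blockLabel π j = blockLabel π i := by
  rw [blockLabel_eq_blockLabel_iff π hj hi]
  exact π.mem_part_iff_part_eq_part (mem_image_range p hj) (mem_image_range p hi)

lemma coe_part_eq_image (hi : i < N) :
    (π.part (p i) : Set α) = p '' {j | j < N ∧ blockLabel π j = blockLabel π i} := by
  ext z
  constructor
  · intro hz
    obtain ⟨j, hj, rfl⟩ := mem_image.mp (π.part_subset _ hz)
    rw [mem_range] at hj
    exact ⟨j, ⟨hj, (mem_part_iff_blockLabel_eq π hi hj).mp hz⟩, rfl⟩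
  · rintro ⟨j, ⟨hj, hji⟩, rfl⟩
    exact (mem_part_iff_blockLabel_eq π hi hj).mpr hji

lemma exists_part_eq_of_mem_parts {B : Finset α} (hB : B ∈ π.parts) :
    ∃ c < N, blockLabel π c = c ∧ π.part (p c) = B := by
  obtain ⟨z, hz, rfl⟩ := π.part_surjOn hB
  obtain ⟨j, hj, rfl⟩ := mem_image.mp hz
  rw [mem_range] at hj
  exact ⟨_, (blockLabel_spec π hj).1, blockLabel_blockLabel π hj, (blockLabel_spec π hj).2⟩

lemma numBlocks_blockLabel : numBlocks (blockLabel π) N = #π.parts := by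
  refine card_bij (fun i _ => π.part (p i)) (fun i hi => ?_) (fun i hi j hj h => ?_)
    fun B hB => ?_
  · exact π.part_mem.mpr (mem_image_range p (mem_range.mp (mem_filter.mp hi).1))
  · simp only [mem_filter, mem_range] at hi hj
    rw [← hi.2, ← hj.2]
    exact (blockLabel_eq_blockLabel_iff π hi.1 hj.1).mpr h
  · obtain ⟨c, hc, hcc, rfl⟩ := exists_part_eq_of_mem_parts π hB
    exact ⟨c, mem_filter.mpr ⟨mem_range.mpr hc, hcc⟩, rfl⟩

lemma blockLabel_injective :
    Function.Injective (blockLabel : Finpartition ((range N).image p) → ℕ → ℕ) := by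
  have hsub {π ρ : Finpartition ((range N).image p)} (h : blockLabel π = blockLabel ρ) :
      π.parts ⊆ ρ.parts := fun B hB => by
    obtain ⟨c, hc, -, rfl⟩ := exists_part_eq_of_mem_parts π hB
    have hpart : π.part (p c) = ρ.part (p c) := by
      rw [← coe_inj, coe_part_eq_image π hc, coe_part_eq_image ρ hc, h]
    exact hpart ▸ ρ.part_mem.mpr (mem_image_range p hc)
  exact fun π ρ h => Finpartition.ext ((hsub h).antisymm (hsub h.symm))

lemma exists_blockLabel_eq {r : ℕ → ℕ → Prop} {f : ℕ → ℕ} (hp : Set.InjOn p (Set.Iio N))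
    (hf : f ∈ labelings r N) : ∃ π : Finpartition ((range N).image p), blockLabel π = f := by
  classical
  let index : α → ℕ := Function.invFunOn p (Set.Iio N)
  let π := Finpartition.ofSetSetoid (Setoid.ker (f ∘ index)) ((range N).image p)
  have hindex {i : ℕ} (hi : i < N) : index (p i) = i := hp.leftInvOn_invFunOn hi
  have hpart {i j : ℕ} (hi : i < N) (hj : j < N) : π.part (p j) = π.part (p i) ↔ f j = f i := by
    rw [← π.mem_part_iff_part_eq_part (mem_image_range p hj) (mem_image_range p hi),
      Finpartition.mem_part_ofSetSetoid_iff_rel]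
    simp [Setoid.ker_def, hindex hi, hindex hj, mem_image_range p hi, mem_image_range p hj, eq_comm]
  refine ⟨π, funext fun i => ?_⟩
  rcases lt_or_ge i N with hi | hi
  · have hle := label_le hf i
    obtain ⟨hlt, hlabel⟩ := blockLabel_spec π hi
    refine (blockLabel_le_of_part_eq π hi (by omega)
      ((hpart hi (by omega)).mpr (label_label hf i))).antisymm ?_
    exact ((hpart hi hlt).mp hlabel).symm.le.trans (label_le hf _)
  · rw [blockLabel_of_le π hi, (mem_labelings.mp hf).2 i hi]

end BlockLabel

namespace IsConvexChain

variable {r : ℕ → ℕ → Prop} {p : ℕ → ℂ} {N : ℕ}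

lemma isNoncrossing_of_blockLabel_mem (h : IsConvexChain r p N)
    {π : Finpartition ((range N).image p)} (hπ : blockLabel π ∈ labelings r N) :
    IsNoncrossing π := by
  have hdisj {c d : ℕ} (hcd : c < d) (hd : d < N) (hlc : blockLabel π c = c)
      (hld : blockLabel π d = d) :
      Disjoint (convexHull ℝ (π.part (p c) : Set ℂ)) (convexHull ℝ (π.part (p d) : Set ℂ)) := by
    obtain ⟨i, j, hij, hj, hr, hc, hd'⟩ := exists_gap hπ hcd hd hlc hld
    rw [coe_part_eq_image π (hcd.trans hd), coe_part_eq_image π hd, hlc, hld]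
    exact h.disjoint_convexHull hij hj hr (fun l hl => ⟨hl.1, hc l hl.1 hl.2⟩)
      fun l hl => hd' l hl.1 hl.2
  intro B hB C hC hBC
  obtain ⟨c, hc, hlc, rfl⟩ := exists_part_eq_of_mem_parts π hB
  obtain ⟨d, hd, hld, rfl⟩ := exists_part_eq_of_mem_parts π hC
  rcases lt_trichotomy c d with hcd | rfl | hdc
  · exact hdisj hcd hd hlc hld
  · exact absurd rfl hBC
  · exact (hdisj hdc hc hld hlc).symm

lemma _root_.IsNoncrossing.blockLabel_eq {π : Finpartition ((range N).image p)}
    (hπ : IsNoncrossing π) {i i' j j' : ℕ} (hi : i < N) (hi' : i' < N) (hj : j < N) (hj' : j' < N)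
    (hii' : blockLabel π i = blockLabel π i') (hjj' : blockLabel π j = blockLabel π j') {z : ℂ}
    (hz : z ∈ segment ℝ (p i) (p i')) (hz' : z ∈ segment ℝ (p j) (p j')) :
    blockLabel π i = blockLabel π j := by
  have hmem {i i' : ℕ} (hi : i < N) (hi' : i' < N) (hii' : blockLabel π i = blockLabel π i')
      (hz : z ∈ segment ℝ (p i) (p i')) : z ∈ convexHull ℝ (π.part (p i) : Set ℂ) :=
    segment_subset_convexHull ((mem_part_iff_blockLabel_eq π hi hi).mpr rfl)
      ((mem_part_iff_blockLabel_eq π hi hi').mpr hii'.symm) hz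
  rw [blockLabel_eq_blockLabel_iff π hi hj]
  by_contra hne
  exact (hπ (π.part_mem.mpr (mem_image_range p hi)) (π.part_mem.mpr (mem_image_range p hj))
    hne).notMem_of_mem_left (hmem hi hi' hii' hz) (hmem hj hj' hjj' hz')

lemma blockLabel_mem_labelings (h : IsConvexChain r p N) {π : Finpartition ((range N).image p)}
    (hπ : IsNoncrossing π) : blockLabel π ∈ labelings r N := by
  refine mem_labelings.mpr ⟨fun j hj => ⟨blockLabel_le π j, fun i hij hi => ?_,
    fun i k hik hkj hr hi => ?_⟩, fun i => blockLabel_of_le π⟩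
  · by_contra! hlt
    have hlj := blockLabel_blockLabel π hj
    have hli := blockLabel_blockLabel π (hij.trans hj)
    have hne : blockLabel π j ≠ i := fun he => by
      rw [he] at hlj
      omega
    obtain ⟨z, hz, hz'⟩ := h.segments_cross hlt (hi.lt_of_ne hne) hij hj
    have := hπ.blockLabel_eq (by omega) (by omega) (by omega) hj hli hlj hz hz'
    omega
  · have hz := h.mem_segment hik hkj hj hr
    rw [← hi]
    exact hπ.blockLabel_eq (by omega) (by omega) (by omega) hj rfl hi (left_mem_segment ℝ _ _) hz

end IsConvexChain

section BlockPolynomial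

open Polynomial

noncomputable instance (P : Finset ℂ) : Fintype (NC P) := Fintype.ofFinite _

/-- The generating polynomial of the noncrossing partitions of `P` by number of blocks. -/
noncomputable def blockPolynomial (P : Finset ℂ) : ℕ[X] := ∑ π : NC P, X ^ #π.parts

lemma coeff_blockPolynomial (P : Finset ℂ) (j : ℕ) :
    (blockPolynomial P).coeff j = Nat.card {π : NC P // #π.parts = j} := by
  simp [blockPolynomial, coeff_X_pow, Nat.card_eq_fintype_card, Fintype.card_subtype, eq_comm]

lemma coeff_blockPolynomial_card_sub (P : Finset ℂ) {k : ℕ} (hk : k < #P) :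
    (blockPolynomial P).coeff (#P - k) = Nat.card {π : NC P // #P - #π.parts = k} := by
  rw [coeff_blockPolynomial]
  have hiff (π : NC P) : #π.parts = #P - k ↔ #P - #π.parts = k := by
    have : #π.parts ≤ #P := π.1.card_parts_le_card
    omega
  simp only [hiff]

namespace IsConvexChain

lemma blockPolynomial_eq {r : ℕ → ℕ → Prop} {p : ℕ → ℂ} {N : ℕ} (h : IsConvexChain r p N) :
    blockPolynomial ((range N).image p) = ∑ f ∈ labelings r N, X ^ numBlocks f N := by
  refine sum_bij (fun π _ => blockLabel π.1) (fun π _ => h.blockLabel_mem_labelings π.2)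
    (fun π _ ρ _ hπρ => Subtype.ext (blockLabel_injective hπρ)) (fun f hf => ?_)
    fun π _ => by rw [numBlocks_blockLabel, NC.parts]
  obtain ⟨π, rfl⟩ := exists_blockLabel_eq h.injOn hf
  exact ⟨⟨π, h.isNoncrossing_of_blockLabel_mem hf⟩, mem_univ _, rfl⟩

variable {a s N : ℕ} {p : ℕ → ℂ}

lemma blockPolynomial_mem_palindromic (h : IsConvexChain (twoSides a s) p (N + 1)) :
    blockPolynomial ((range (N + 1)).image p) ∈ palindromic ℕ (N + 2) := by
  rw [h.blockPolynomial_eq]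
  simpa [transferSum] using
    transferSum_mem_palindromic (a := a) (s := s) (M := N) (isBalanced_one (R := ℕ))

theorem rank_symmetric (h : IsConvexChain (twoSides a s) p N) {P : Finset ℂ}
    (hP : P = (range N).image p) {k : ℕ} (hk : k ≤ #P - 1) :
    Nat.card {π : NC P // #P - #π.parts = k} =
      Nat.card {π : NC P // #P - #π.parts = #P - 1 - k} := by
  have hcard : #P = N := by
    rw [hP, card_image_of_injOn (by simpa using h.injOn), card_range]
  rcases N with _ | M
  · rw [show #P - 1 - k = k by omega]
  rw [← coeff_blockPolynomial_card_sub P (by omega),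
    ← coeff_blockPolynomial_card_sub P (by omega)]
  refine coeff_eq_coeff_of_mem_palindromic ?_
  rw [show #P - k + (#P - (#P - 1 - k)) = M + 2 by omega, hP]
  exact h.blockPolynomial_mem_palindromic

end IsConvexChain

end BlockPolynomial

lemma add_real_smul_mem_segment (z w : ℂ) {x y t : ℝ} (hxy : x ≤ y) (hyt : y ≤ t) :
    z + y • w ∈ segment ℝ (z + x • w) (z + t • w) := by
  rw [mem_segment_translate]
  have hy : y ∈ segment ℝ x t := segment_eq_Icc (hxy.trans hyt) ▸ ⟨hxy, hyt⟩
  have := Set.mem_image_of_mem (LinearMap.toSpanSingleton ℝ ℂ w) hy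
  rwa [← (LinearMap.toSpanSingleton ℝ ℂ w).coe_toAffineMap, image_segment] at this

section Cone

lemma orient_axes_pos {x₂ x₃ y₁ y₂ : ℝ} (hy₁ : 0 < y₁) (hx₃ : 0 < x₃)
    (h : x₂ = 0 ∧ y₂ < y₁ ∨ y₂ = 0 ∧ x₂ < x₃) : 0 < orient ⟨0, y₁⟩ ⟨x₂, y₂⟩ ⟨x₃, 0⟩ := by
  have heq : orient ⟨0, y₁⟩ ⟨x₂, y₂⟩ ⟨x₃, 0⟩ = y₁ * x₃ - x₂ * y₁ - y₂ * x₃ := by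
    unfold orient
    ring
  rw [heq]
  rcases h with ⟨rfl, h⟩ | ⟨rfl, h⟩
  · linarith [mul_lt_mul_of_pos_right h hx₃]
  · linarith [mul_lt_mul_of_pos_left h hy₁]

lemma orient_diagonal_pos {x₁ x₂ y₁ y₂ t : ℝ} (hx₁ : x₁ < t) (hy₁ : y₁ < t)
    (h : x₁ ≤ x₂ ∧ y₂ < y₁ ∨ x₁ < x₂ ∧ y₂ ≤ y₁) : 0 < orient ⟨x₁, y₁⟩ ⟨x₂, y₂⟩ ⟨t, t⟩ := by
  have heq : orient ⟨x₁, y₁⟩ ⟨x₂, y₂⟩ ⟨t, t⟩ = (x₂ - x₁) * (t - y₁) + (y₁ - y₂) * (t - x₁) := by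
    unfold orient
    ring
  rw [heq]
  rcases h with ⟨hx, hy⟩ | ⟨hx, hy⟩
  · exact add_pos_of_nonneg_of_pos (mul_nonneg (sub_nonneg.mpr hx) (sub_pos.mpr hy₁).le)
      (mul_pos (sub_pos.mpr hy) (sub_pos.mpr hx₁))
  · exact add_pos_of_pos_of_nonneg (mul_pos (sub_pos.mpr hx) (sub_pos.mpr hy₁))
      (mul_nonneg (sub_nonneg.mpr hy) (sub_pos.mpr hx₁).le)

/-- The points of a cone configuration with `N` points, listed down the imaginary axis and then
along the real axis. The imaginary axis holds `n` points above `0`, and `0` is included for `c = 0`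
and left out for `c = 1`; truncated subtraction makes one of the coordinates vanish. The auxiliary
point `N` is chosen far out on the diagonal. -/
noncomputable def conePoint (c n N i : ℕ) : ℂ :=
  if i < N then ⟨(i + c - n : ℕ), (n - i : ℕ)⟩ else ⟨N + 1, N + 1⟩

variable {c m n N i j k : ℕ}

lemma conePoint_of_lt (hi : i < N) : conePoint c n N i = ⟨(i + c - n : ℕ), (n - i : ℕ)⟩ :=
  if_pos hi

lemma conePoint_imag (hi : i < N) (hin : i + c ≤ n) :
    conePoint c n N i = (n - i : ℕ) * Complex.I := by
  rw [conePoint_of_lt hi, Nat.sub_eq_zero_of_le hin]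
  apply Complex.ext <;> simp

lemma conePoint_real (hi : i < N) (hni : n ≤ i) : conePoint c n N i = (i + c - n : ℕ) := by
  rw [conePoint_of_lt hi, Nat.sub_eq_zero_of_le hni]
  apply Complex.ext <;> simp

lemma orient_conePoint_pos (hc : c ≤ 1) (hn : n ≤ N) (hij : i < j) (hjk : j < k) (hk : k ≤ N)
    (hr : ¬(k < N ∧ twoSides (n - c) n i k)) :
    0 < orient (conePoint c n N i) (conePoint c n N j) (conePoint c n N k) := by
  rw [conePoint_of_lt (by omega), conePoint_of_lt (by omega)]
  rcases hk.lt_or_eq with hk | rfl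
  · have hsides : n - c < k ∧ i < n := by simpa [hk, twoSides] using hr
    rw [conePoint_of_lt hk, show n - k = 0 by omega, show i + c - n = 0 by omega, Nat.cast_zero]
    refine orient_axes_pos (by norm_cast; omega) (by norm_cast; omega) ?_
    norm_cast
    omega
  · rw [conePoint, if_neg (lt_irrefl k)]
    refine orient_diagonal_pos (by norm_cast; omega) (by norm_cast; omega) ?_
    norm_cast
    omega

lemma conePoint_mem_segment (hij : i < j) (hjk : j < k) (hk : k < N)
    (hr : twoSides (n - c) n i k) :
    conePoint c n N j ∈ segment ℝ (conePoint c n N i) (conePoint c n N k) := by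
  have hij' : (i : ℝ) ≤ j := by exact_mod_cast hij.le
  have hjk' : (j : ℝ) ≤ k := by exact_mod_cast hjk.le
  have himag {l : ℕ} (hl : l ≤ k) (hkn : k + c ≤ n) :
      conePoint c n N l = n * Complex.I + (l : ℝ) • -Complex.I := by
    rw [conePoint_imag (hl.trans_lt hk) (by omega), Nat.cast_sub (by omega), Complex.real_smul]
    push_cast
    ring
  have hreal {l : ℕ} (hnl : n ≤ l) (hl : l ≤ k) :
      conePoint c n N l = (c - n : ℂ) + (l : ℝ) • 1 := by
    rw [conePoint_real (hl.trans_lt hk) hnl, Nat.cast_sub (by omega), Complex.real_smul]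
    push_cast
    ring
  rcases hr with hr | hr
  · rw [himag (hij.le.trans hjk.le) (by omega), himag hjk.le (by omega), himag le_rfl (by omega)]
    exact add_real_smul_mem_segment _ _ hij' hjk'
  · rw [hreal hr (by omega), hreal (by omega) hjk.le, hreal (by omega) le_rfl]
    exact add_real_smul_mem_segment _ _ hij' hjk'

lemma isConvexChain_conePoint (hc : c ≤ 1) (hn : n ≤ N) :
    IsConvexChain (twoSides (n - c) n) (conePoint c n N) N where
  orient_pos _ _ _ := orient_conePoint_pos hc hn
  mem_segment _ _ _ := conePoint_mem_segment
  mono := by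
    unfold twoSides
    omega

lemma Uconfig_eq_image (m n : ℕ) :
    Uconfig m n = (range (n + m)).image (conePoint 1 n (n + m)) := by
  ext z
  simp only [Uconfig, mem_union, mem_image, mem_Icc, mem_range]
  constructor
  · rintro (⟨j, hj, rfl⟩ | ⟨j, hj, rfl⟩)
    · exact ⟨n + j - 1, by omega, by
        rw [conePoint_real (by omega) (by omega), show n + j - 1 + 1 - n = j by omega]⟩
    · exact ⟨n - j, by omega, by
        rw [conePoint_imag (by omega) (by omega), Nat.sub_sub_self hj.2]⟩
  · rintro ⟨i, hi, rfl⟩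
    rcases lt_or_ge i n with hin | hni
    · exact Or.inr ⟨n - i, by omega, (conePoint_imag hi hin).symm⟩
    · exact Or.inl ⟨i + 1 - n, by omega, (conePoint_real hi hni).symm⟩

lemma Vconfig_eq_image (m n : ℕ) :
    Vconfig m n = (range (n + 1 + m)).image (conePoint 0 n (n + 1 + m)) := by
  ext z
  simp only [Vconfig, Uconfig, mem_insert, mem_union, mem_image, mem_Icc, mem_range]
  constructor
  · rintro (rfl | ⟨j, hj, rfl⟩ | ⟨j, hj, rfl⟩)
    · exact ⟨n, by omega, by simp [conePoint_real (show n < n + 1 + m by omega)]⟩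
    · exact ⟨n + j, by omega, by
        rw [conePoint_real (by omega) (by omega), add_zero, Nat.add_sub_cancel_left]⟩
    · exact ⟨n - j, by omega, by
        rw [conePoint_imag (by omega) (by omega), Nat.sub_sub_self hj.2]⟩
  · rintro ⟨i, hi, rfl⟩
    rcases lt_trichotomy i n with hin | rfl | hni
    · exact Or.inr (Or.inr ⟨n - i, by omega, (conePoint_imag hi hin.le).symm⟩)
    · exact Or.inl (by simp [conePoint_real hi])
    · exact Or.inr (Or.inl ⟨i - n, by omega, (conePoint_real (c := 0) hi hni.le).symm⟩)

end Cone

section Semicircle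

lemma orient_exp (u v w : ℝ) :
    orient (Complex.exp ((v - 2 * u : ℝ) * Complex.I)) (Complex.exp (v * Complex.I))
        (Complex.exp ((v + 2 * w : ℝ) * Complex.I)) =
      4 * Real.sin u * Real.sin w * Real.sin (u + w) := by
  have hadd : orient (Complex.exp ((v - 2 * u : ℝ) * Complex.I)) (Complex.exp (v * Complex.I))
        (Complex.exp ((v + 2 * w : ℝ) * Complex.I)) =
      Real.sin (2 * u) + Real.sin (2 * w) - Real.sin (2 * u + 2 * w) := by
    simp only [orient, Complex.exp_ofReal_mul_I_re, Complex.exp_ofReal_mul_I_im, Real.sin_add,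
      Real.sin_sub, Real.cos_add, Real.cos_sub]
    linear_combination (Real.sin (2 * u) * (1 - Real.cos (2 * w)) +
      Real.sin (2 * w) * (1 - Real.cos (2 * u))) * Real.sin_sq_add_cos_sq v
  rw [hadd]
  simp only [Real.sin_add, Real.sin_two_mul, Real.cos_two_mul]
  linear_combination (-4 * Real.sin u * Real.cos u) * Real.sin_sq_add_cos_sq w -
    4 * Real.sin w * Real.cos w * Real.sin_sq_add_cos_sq u

lemma orient_exp_pos {α β γ : ℝ} (hαβ : α < β) (hβγ : β < γ) (hγα : γ < α + 2 * Real.pi) :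
    0 < orient (Complex.exp (α * Complex.I)) (Complex.exp (β * Complex.I))
      (Complex.exp (γ * Complex.I)) := by
  obtain ⟨u, rfl⟩ : ∃ u, α = β - 2 * u := ⟨(β - α) / 2, by ring⟩
  obtain ⟨w, rfl⟩ : ∃ w, γ = β + 2 * w := ⟨(γ - β) / 2, by ring⟩
  rw [orient_exp]
  have hu := Real.sin_pos_of_pos_of_lt_pi (x := u) (by linarith) (by linarith)
  have hw := Real.sin_pos_of_pos_of_lt_pi (x := w) (by linarith) (by linarith)
  have huw := Real.sin_pos_of_pos_of_lt_pi (x := u + w) (by linarith) (by linarith)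
  positivity

lemma Sy_eq_exp (n j : ℕ) :
    Sy n j = Complex.exp ((Real.pi * j / (n + 1) : ℝ) * Complex.I) := by
  rw [Sy]
  push_cast
  rfl

lemma orient_Sy_pos {n i j k : ℕ} (hij : i < j) (hjk : j < k) (hk : k ≤ n + 1) :
    0 < orient (Sy n i) (Sy n j) (Sy n k) := by
  have hπ := Real.pi_pos
  have hk' : (k : ℝ) ≤ n + 1 := by exact_mod_cast hk
  have hkπ : Real.pi * k / (n + 1) ≤ Real.pi :=
    div_le_of_le_mul₀ (by positivity) hπ.le (by gcongr)
  have hi : 0 ≤ Real.pi * i / (n + 1) := by positivity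
  simp only [Sy_eq_exp]
  exact orient_exp_pos (by gcongr) (by gcongr) (by linarith)

lemma Sy_zero (n : ℕ) : Sy n 0 = 1 := by simp [Sy]

lemma Sy_add_one (n : ℕ) : Sy n (n + 1) = -1 := by
  rw [Sy]
  push_cast
  rw [mul_div_cancel_right₀ _ (by norm_cast), Complex.exp_pi_mul_I]

lemma Sy_two_mul (n j : ℕ) : Sy (2 * n + 1) (2 * j) = Sy n j := by
  have hden : ((2 * n + 1 : ℕ) : ℂ) + 1 = 2 * (n + 1) := by
    push_cast
    ring
  rw [Sy, Sy, hden, Nat.cast_mul, Nat.cast_two, mul_left_comm, mul_div_mul_left _ _ two_ne_zero]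

lemma Sx_eq (m i : ℕ) : Sx m i = -1 + (i : ℝ) • (2 / (m + 1) : ℂ) := by
  simp only [Sx, Complex.real_smul]
  push_cast
  ring

lemma Sx_mem_segment {m i j k : ℕ} (hij : i ≤ j) (hjk : j ≤ k) :
    Sx m j ∈ segment ℝ (Sx m i) (Sx m k) := by
  simp only [Sx_eq]
  exact add_real_smul_mem_segment _ _ (by exact_mod_cast hij) (by exact_mod_cast hjk)

lemma Sx_eq_ofReal (m i : ℕ) : Sx m i = (-1 + 2 * i / (m + 1) : ℝ) := by
  rw [Sx]
  push_cast
  rfl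

lemma orient_Sx_Sx_Sy_pos {m n i j k : ℕ} (hij : i < j) (hk : 0 < k) (hkn : k ≤ n) :
    0 < orient (Sx m i) (Sx m j) (Sy n k) := by
  have hk' : (k : ℝ) < n + 1 := by norm_cast; omega
  have hsin : 0 < Real.sin (Real.pi * k / (n + 1)) :=
    Real.sin_pos_of_pos_of_lt_pi (by positivity) (by
      rw [div_lt_iff₀ (by positivity)]
      gcongr)
  have hlt : 2 * (i : ℝ) / (m + 1) < 2 * j / (m + 1) := by gcongr
  simp only [orient, Sx_eq_ofReal, Sy_eq_exp, Complex.ofReal_re, Complex.ofReal_im,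
    Complex.exp_ofReal_mul_I_im, sub_zero, zero_mul, add_sub_add_left_eq_sub]
  exact mul_pos (sub_pos.mpr hlt) hsin

lemma orient_Sx_Sy_Sy_pos {m n i j k : ℕ} (hi : i ≤ m + 1) (hj : 0 < j) (hjk : j < k)
    (hk : k ≤ n) : 0 < orient (Sx m i) (Sy n j) (Sy n k) := by
  have hseg : Sx m i ∈ segment ℝ (Sy n (n + 1)) (Sy n 0) := by
    have hm : (m : ℂ) + 1 ≠ 0 := by norm_cast
    have h0 : Sx m 0 = -1 := by simp [Sx]
    have h1 : Sx m (m + 1) = 1 := by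
      rw [Sx]
      push_cast
      rw [mul_div_cancel_right₀ _ hm]
      ring
    rw [Sy_add_one, Sy_zero, ← h0, ← h1]
    exact Sx_mem_segment (Nat.zero_le i) hi
  rw [← orient_rotate]
  refine (convex_setOf_orient_pos (Sy n j) (Sy n k)).segment_subset ?_ ?_ hseg
  · exact orient_Sy_pos hjk (Nat.lt_succ_of_le hk) le_rfl
  · exact (orient_Sy_pos hj hjk (by omega)).trans_eq (orient_rotate _ _ _).symm

/-- The points of `S_{m,n}` in counterclockwise order from `-1`. The arc is sampled by the
finer points `Sy (2 * n + 1)`, of which those with even index are the points `Sy n`; the last one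
with odd index serves as auxiliary point, between the last point of `S_{m,n}` and `-1`. -/
noncomputable def semicirclePoint (m n i : ℕ) : ℂ :=
  if i < m + 2 then Sx m i else Sy (2 * n + 1) (min (2 * (i - (m + 1))) (2 * n + 1))

variable {m n i j k : ℕ}

lemma semicirclePoint_of_lt (hi : i < m + 2) : semicirclePoint m n i = Sx m i := if_pos hi

lemma semicirclePoint_of_ge (hi : m + 2 ≤ i) :
    semicirclePoint m n i = Sy (2 * n + 1) (min (2 * (i - (m + 1))) (2 * n + 1)) :=
  if_neg hi.not_gt

lemma semicirclePoint_arc (hj : 0 < j) (hjn : j ≤ n) :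
    semicirclePoint m n (m + 1 + j) = Sy n j := by
  rw [semicirclePoint_of_ge (by omega), Nat.add_sub_cancel_left, min_eq_left (by omega),
    Sy_two_mul]

lemma orient_semicirclePoint_pos (hij : i < j) (hjk : j < k) (hmk : m + 2 ≤ k)
    (hk : k ≤ m + 2 + n) : 0 < orient (semicirclePoint m n i) (semicirclePoint m n j)
      (semicirclePoint m n k) := by
  rw [semicirclePoint_of_ge hmk]
  rcases lt_or_ge i (m + 2) with hi | hi
  · rw [semicirclePoint_of_lt hi]
    rcases lt_or_ge j (m + 2) with hj | hj
    · rw [semicirclePoint_of_lt hj]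
      exact orient_Sx_Sx_Sy_pos hij (by omega) (by omega)
    · rw [semicirclePoint_of_ge hj]
      exact orient_Sx_Sy_Sy_pos (by omega) (by omega) (by omega) (by omega)
  · rw [semicirclePoint_of_ge hi, semicirclePoint_of_ge (hi.trans hij.le)]
    exact orient_Sy_pos (by omega) (by omega) (by omega)

lemma isConvexChain_semicirclePoint (m n : ℕ) :
    IsConvexChain (twoSides (m + 1) (m + 2 + n)) (semicirclePoint m n) (m + 2 + n) where
  orient_pos i j k hij hjk hk hr := by
    rw [twoSides] at hr
    exact orient_semicirclePoint_pos hij hjk (by omega) hk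
  mem_segment i j k hij hjk hk hr := by
    rw [twoSides] at hr
    simp only [semicirclePoint_of_lt (show i < m + 2 by omega),
      semicirclePoint_of_lt (show j < m + 2 by omega),
      semicirclePoint_of_lt (show k < m + 2 by omega)]
    exact Sx_mem_segment hij.le hjk.le
  mono := by
    unfold twoSides
    omega

lemma Sconfig_eq_image (m n : ℕ) :
    Sconfig m n = (range (m + 2 + n)).image (semicirclePoint m n) := by
  ext z
  simp only [Sconfig, mem_union, mem_image, mem_Icc, mem_range]
  constructor
  · rintro (⟨j, hj, rfl⟩ | ⟨j, ⟨hj, hjn⟩, rfl⟩)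
    · exact ⟨j, by omega, semicirclePoint_of_lt hj⟩
    · exact ⟨m + 1 + j, by omega, semicirclePoint_arc hj hjn⟩
  · rintro ⟨i, hi, rfl⟩
    rcases lt_or_ge i (m + 2) with him | him
    · exact Or.inl ⟨i, him, (semicirclePoint_of_lt him).symm⟩
    · obtain ⟨j, rfl⟩ := Nat.exists_eq_add_of_le (show m + 1 ≤ i by omega)
      exact Or.inr ⟨j, by omega, (semicirclePoint_arc (by omega) (by omega)).symm⟩

end Semicircle

/-- The posets `NC(U_{m,n})`, `NC(V_{m,n})` and `NC(S_{m,n})` are rank-symmetric: for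
`ρ(π) = |P| - #blocks(π)` and height `h = |P| - 1`, for every `k ≤ h` the number of
noncrossing partitions of rank `k` equals the number of noncrossing partitions of rank
`h - k`. -/
theorem nc_UVS_rank_symmetric (m n k : ℕ) :
    ((k ≤ (Uconfig m n).card - 1 →
      Nat.card {π : NC (Uconfig m n) // (Uconfig m n).card - π.parts.card = k} =
        Nat.card {π : NC (Uconfig m n) // (Uconfig m n).card - π.parts.card =
          ((Uconfig m n).card - 1) - k})) ∧
    ((k ≤ (Vconfig m n).card - 1 →
      Nat.card {π : NC (Vconfig m n) // (Vconfig m n).card - π.parts.card = k} =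
        Nat.card {π : NC (Vconfig m n) // (Vconfig m n).card - π.parts.card =
          ((Vconfig m n).card - 1) - k})) ∧
    ((k ≤ (Sconfig m n).card - 1 →
      Nat.card {π : NC (Sconfig m n) // (Sconfig m n).card - π.parts.card = k} =
        Nat.card {π : NC (Sconfig m n) // (Sconfig m n).card - π.parts.card =
          ((Sconfig m n).card - 1) - k})) :=
  ⟨(isConvexChain_conePoint le_rfl (Nat.le_add_right n m)).rank_symmetric (Uconfig_eq_image m n),
    (isConvexChain_conePoint zero_le_one (by omega)).rank_symmetric (Vconfig_eq_image m n),
    (isConvexChain_semicirclePoint m n).rank_symmetric (Sconfig_eq_image m n)⟩
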